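/- arXiv:2503.01247 — 2 statements merged into one kernel-verified Lean document; each statement's English description precedes it below -/
import Mathlib

section
/- For all σ-structures A and B and every k ∈ ℕ, A and B satisfy the same sentences of ∃FO_k if, and only if, there exist pathwise embeddings F_k^I(A) → F_k^I(B) and F_k^I(B) → F_k^I(A) in EM(E_k^I). -/
/-- A relational vocabulary: a type of relation symbols together with their arities. -/
structure Vocab : Type 1 where
  Rel : Type
  ar : Rel → ℕ

/-- A structure for the relational vocabulary `V` with carrier `α`. -/
structure Str (V : Vocab) (α : Type) : Type where
  rel : ∀ r : V.Rel, (Fin (V.ar r) → α) → Prop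
/-- Existential first-order formulas over `V` with free variables among `Fin n`
(de Bruijn style): no universal quantifiers, and negations only on atomic formulas. -/
inductive EFml (V : Vocab) : ℕ → Type
  | rel {n : ℕ} (r : V.Rel) (v : Fin (V.ar r) → Fin n) : EFml V n
  | nrel {n : ℕ} (r : V.Rel) (v : Fin (V.ar r) → Fin n) : EFml V n
  | eq {n : ℕ} (i j : Fin n) : EFml V n
  | ne {n : ℕ} (i j : Fin n) : EFml V n
  | and {n : ℕ} (φ ψ : EFml V n) : EFml V n
  | or {n : ℕ} (φ ψ : EFml V n) : EFml V n
  | ex {n : ℕ} (φ : EFml V (n + 1)) : EFml V n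

namespace EFml

/-- Quantifier rank. -/
def qr {V : Vocab} : ∀ {n : ℕ}, EFml V n → ℕ
  | _, .rel _ _ => 0
  | _, .nrel _ _ => 0
  | _, .eq _ _ => 0
  | _, .ne _ _ => 0
  | _, .and φ ψ => max (qr φ) (qr ψ)
  | _, .or φ ψ => max (qr φ) (qr ψ)
  | _, .ex φ => qr φ + 1

/-- Satisfaction in a structure, relative to an environment. -/
def Sat {V : Vocab} {α : Type} (M : Str V α) : ∀ {n : ℕ}, EFml V n → (Fin n → α) → Prop
  | _, .rel r v, e => M.rel r fun i => e (v i)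
  | _, .nrel r v, e => ¬ M.rel r fun i => e (v i)
  | _, .eq i j, e => e i = e j
  | _, .ne i j, e => e i ≠ e j
  | _, .and φ ψ, e => Sat M φ e ∧ Sat M ψ e
  | _, .or φ ψ, e => Sat M φ e ∨ Sat M ψ e
  | _, .ex φ, e => ∃ a : α, Sat M φ (Fin.snoc e a)

end EFml
/-- An object datum for the Eilenberg–Moore category `EM(E_k^I)` of the
Ehrenfeucht–Fraïssé comonad over `σ^I = σ ∪ {I}`: a `σ`-structure together with an
interpretation `ieq` of the fresh binary relation symbol `I` and a (forest) order. -/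
structure EObj (V : Vocab) : Type 1 where
  carrier : Type
  rel : ∀ r : V.Rel, (Fin (V.ar r) → carrier) → Prop
  ieq : carrier → carrier → Prop
  le : carrier → carrier → Prop

namespace EObj

variable {V : Vocab}

/-- Gaifman adjacency, with respect to all relations of `σ ∪ {I}`. -/
def Adj (X : EObj V) (x y : X.carrier) : Prop :=
  x ≠ y ∧ ((∃ r v, X.rel r v ∧ (∃ i, v i = x) ∧ (∃ j, v j = y)) ∨ X.ieq x y ∨ X.ieq y x)

/-- The covering relation of the order of `X`. -/
def Cover (X : EObj V) (x y : X.carrier) : Prop :=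
  X.le x y ∧ x ≠ y ∧ ∀ z, X.le x z → X.le z y → z = x ∨ z = y

/-- Roots, i.e. minimal elements of the forest order. -/
def IsRoot (X : EObj V) (x : X.carrier) : Prop := ∀ y, X.le y x → y = x

/-- `X` is (the datum of) a coalgebra for `E_k^I`: a forest-ordered `σ^I`-structure of
height at most `k` in which Gaifman-adjacent elements are comparable. -/
def IsCoalg (k : ℕ) (X : EObj V) : Prop :=
  (∀ x, X.le x x) ∧ (∀ x y z, X.le x y → X.le y z → X.le x z) ∧
  (∀ x y, X.le x y → X.le y x → x = y) ∧
  (∀ x : X.carrier, {y | X.le y x}.Finite ∧ {y | X.le y x}.ncard ≤ k + 1 ∧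
    ∀ y z, X.le y x → X.le z x → X.le y z ∨ X.le z y) ∧
  (∀ x y, X.Adj x y → X.le x y ∨ X.le y x)

/-- Morphisms of `EM(E_k^I)`: homomorphisms of `σ^I`-structures that are also forest
morphisms (they send roots to roots and preserve the covering relation). -/
def IsHom (X Y : EObj V) (f : X.carrier → Y.carrier) : Prop :=
  (∀ r v, X.rel r v → Y.rel r fun i => f (v i)) ∧
  (∀ x y, X.ieq x y → Y.ieq (f x) (f y)) ∧
  (∀ x, X.IsRoot x → Y.IsRoot (f x)) ∧
  (∀ x y, X.Cover x y → Y.Cover (f x) (f y))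

/-- Embeddings: morphisms that are injective and reflect all relations. -/
def IsEmb (X Y : EObj V) (f : X.carrier → Y.carrier) : Prop :=
  IsHom X Y f ∧ Function.Injective f ∧
  (∀ r v, (Y.rel r fun i => f (v i)) → X.rel r v) ∧
  (∀ x y, Y.ieq (f x) (f y) → X.ieq x y)

/-- Paths: objects whose forest order is finite and linear. -/
def IsPath (X : EObj V) : Prop :=
  Finite X.carrier ∧ ∀ x y : X.carrier, X.le x y ∨ X.le y x

/-- Pathwise embeddings: morphisms `f : X → Y` such that for every path embedding
`m : P ↪ X` the composite `f ∘ m` is a path embedding. -/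
def IsPWEmb (k : ℕ) (X Y : EObj V) (f : X.carrier → Y.carrier) : Prop :=
  IsHom X Y f ∧ ∀ P : EObj V, IsCoalg k P → IsPath P →
    ∀ m : P.carrier → X.carrier, IsEmb P X m → IsEmb P Y fun p => f (m p)

/-- Open morphisms: every commutative square of path embeddings over `f` admits a
diagonal filler. -/
def IsOpen (k : ℕ) (X Y : EObj V) (f : X.carrier → Y.carrier) : Prop :=
  ∀ P Q : EObj V, IsCoalg k P → IsPath P → IsCoalg k Q → IsPath Q →
    ∀ (i : P.carrier → Q.carrier) (m : P.carrier → X.carrier)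
      (n : Q.carrier → Y.carrier),
      IsEmb P Q i → IsEmb P X m → IsEmb Q Y n → (∀ x, n (i x) = f (m x)) →
      ∃ d : Q.carrier → X.carrier, IsHom Q X d ∧ (∀ x, d (i x) = m x) ∧ ∀ q, f (d q) = n q

end EObj
/-- The co-free coalgebra `F_k^I(A) = (E_k J(A), ⊑)` on `J(A)`: non-empty sequences of
elements of `A` of length at most `k`, ordered by the prefix order.  A tuple of sequences
is related iff the sequences are pairwise comparable and their last elements are related
in `J(A)`; the fresh relation `I` is interpreted as comparability plus equality of last
elements (the diagonal of `J`). -/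
def FE (V : Vocab) (k : ℕ) {α : Type} (A : Str V α) : EObj V where
  carrier := {l : List α // l ≠ [] ∧ l.length ≤ k}
  rel r v :=
    (∀ i j, (v i).1 <+: (v j).1 ∨ (v j).1 <+: (v i).1) ∧
    A.rel r fun i => (v i).1.getLast (v i).2.1
  ieq s t := ((s.1 <+: t.1) ∨ (t.1 <+: s.1)) ∧ s.1.getLast s.2.1 = t.1.getLast t.2.1
  le s t := s.1 <+: t.1
/-!
Both conditions say that Duplicator wins, in both directions, the `k`-round existential
Ehrenfeucht–Fraïssé game, in which Spoiler plays only in the first structure.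

Against formulas: since `σ` is finite, finitely many formulas of rank at most `m` decide the
`m`-round game, and Duplicator answers a move `a` by a witness of the conjunction of those that
hold at `a`.

Against morphisms: a sequence in `F_k^I(A)` is a history of Spoiler's moves, and a forest morphism
`F_k^I(A) → F_k^I(B)` assigns to it a history of answers, extending the answers already given. The
paths embedded in `F_k^I(A)` being chains of prefixes, the morphism is a pathwise embedding exactly
when the moves and answers of every history form a partial isomorphism.
-/

section

variable {V : Vocab} {α β : Type} {A : Str V α} {B : Str V β}

/-- The set of pairs `p` is the graph of a partial isomorphism between `A` and `B`. -/
structure PartialIso (A : Str V α) (B : Str V β) (p : Set (α × β)) : Prop where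
  eq_iff : ∀ x ∈ p, ∀ y ∈ p, x.1 = y.1 ↔ x.2 = y.2
  rel_iff : ∀ r (v : Fin (V.ar r) → α × β), (∀ i, v i ∈ p) →
    (A.rel r (fun i => (v i).1) ↔ B.rel r fun i => (v i).2)

theorem PartialIso.mono {p q : Set (α × β)} (hq : PartialIso A B q) (hpq : p ⊆ q) :
    PartialIso A B p where
  eq_iff x hx y hy := hq.eq_iff x (hpq hx) y (hpq hy)
  rel_iff r v hv := hq.rel_iff r v fun i => hpq (hv i)

/-- Duplicator wins the existential Ehrenfeucht–Fraïssé game with `m` rounds left, the pairs of `p`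
having been played so far. In each round Spoiler moves in `A` and Duplicator answers in `B`. -/
def DuplicatorWins (A : Str V α) (B : Str V β) : ℕ → Set (α × β) → Prop
  | 0, p => PartialIso A B p
  | m + 1, p => PartialIso A B p ∧ ∀ a, ∃ b, DuplicatorWins A B m (insert (a, b) p)

theorem DuplicatorWins.partialIso {p : Set (α × β)} :
    ∀ {m : ℕ}, DuplicatorWins A B m p → PartialIso A B p
  | 0, h => h
  | _ + 1, h => h.1

/-! ### The game and existential formulas -/

theorem DuplicatorWins.sat {n : ℕ} {φ : EFml V n} {m : ℕ} {p : Set (α × β)} {c : Fin n → α × β}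
    (h : DuplicatorWins A B m p) (hc : ∀ i, c i ∈ p) (hφ : φ.qr ≤ m)
    (hA : φ.Sat A (Prod.fst ∘ c)) : φ.Sat B (Prod.snd ∘ c) := by
  induction φ generalizing m p with
  | rel r v => exact (h.partialIso.rel_iff r (fun i => c (v i)) fun i => hc _).1 hA
  | nrel r v => exact fun hB => hA ((h.partialIso.rel_iff r (fun i => c (v i)) fun i => hc _).2 hB)
  | eq i j => exact (h.partialIso.eq_iff _ (hc i) _ (hc j)).1 hA
  | ne i j => exact fun hB => hA ((h.partialIso.eq_iff _ (hc i) _ (hc j)).2 hB)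
  | and φ ψ ihφ ihψ =>
    exact ⟨ihφ h hc (le_of_max_le_left hφ) hA.1, ihψ h hc (le_of_max_le_right hφ) hA.2⟩
  | or φ ψ ihφ ihψ =>
    exact hA.imp (ihφ h hc (le_of_max_le_left hφ)) (ihψ h hc (le_of_max_le_right hφ))
  | ex φ ih =>
    obtain ⟨a, ha⟩ := hA
    obtain ⟨m, rfl⟩ := Nat.exists_eq_add_of_le' (Nat.one_le_of_lt hφ)
    obtain ⟨b, hb⟩ := h.2 a
    have hcab : ∀ i, (Fin.snoc c (a, b) : Fin _ → α × β) i ∈ insert (a, b) p := by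
      intro i
      induction i using Fin.lastCases with
      | last => simp
      | cast i => simp [hc i]
    have hB := ih hb hcab (Nat.le_of_succ_le_succ hφ) (by rwa [Fin.comp_snoc])
    exact ⟨b, by rwa [Fin.comp_snoc] at hB⟩

namespace EFml

/-- Conjunction of a list of formulas. The empty conjunction is `x₀ = x₀`, so at least one variable
has to be available. -/
def conj {n : ℕ} (l : List (EFml V (n + 1))) : EFml V (n + 1) :=
  l.foldr .and (.eq 0 0)

theorem sat_conj {n : ℕ} {l : List (EFml V (n + 1))} {e : Fin (n + 1) → α} :
    (conj l).Sat A e ↔ ∀ φ ∈ l, φ.Sat A e := by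
  induction l with
  | nil => simp [conj, Sat]
  | cons φ l ih => simpa [conj, Sat] using fun _ => ih

theorem qr_conj_le {n m : ℕ} {l : List (EFml V (n + 1))} (hl : ∀ φ ∈ l, φ.qr ≤ m) :
    (conj l).qr ≤ m := by
  induction l with
  | nil => exact Nat.zero_le m
  | cons φ l ih =>
    exact max_le (hl φ List.mem_cons_self) (ih fun ψ hψ => hl ψ (List.mem_cons_of_mem φ hψ))

/-- The atomic and negated atomic formulas. -/
def literals (V : Vocab) (n : ℕ) : Set (EFml V n) :=
  (⋃ r, Set.range (rel r) ∪ Set.range (nrel r)) ∪ ⋃ i, Set.range (eq i) ∪ Set.range (ne i)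

theorem finite_literals [Finite V.Rel] (n : ℕ) : (literals V n).Finite :=
  (Set.finite_iUnion fun _ => (Set.finite_range _).union (Set.finite_range _)).union
    (Set.finite_iUnion fun _ => (Set.finite_range _).union (Set.finite_range _))

theorem qr_of_mem_literals {n : ℕ} {φ : EFml V n} (hφ : φ ∈ literals V n) : φ.qr = 0 := by
  simp only [literals, Set.mem_union, Set.mem_iUnion, Set.mem_range] at hφ
  rcases hφ with ⟨_, ⟨_, rfl⟩ | ⟨_, rfl⟩⟩ | ⟨_, ⟨_, rfl⟩ | ⟨_, rfl⟩⟩ <;> rfl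

/-- Formulas of rank at most `m` that decide the `m`-round existential game: the literals, together
with `∃ x, ⋀ T` for each set `T` of formulas deciding the game with one round less. There are
finitely many of them if the vocabulary is finite. -/
def gameFormulas (V : Vocab) : ℕ → ∀ n : ℕ, Set (EFml V n)
  | 0, n => literals V n
  | m + 1, n => literals V n ∪
      (fun T : Finset _ => ex (conj T.toList)) '' {T | ↑T ⊆ gameFormulas V m (n + 1)}

theorem finite_gameFormulas [Finite V.Rel] (m n : ℕ) : (gameFormulas V m n).Finite := by
  induction m generalizing n with
  | zero => exact finite_literals n
  | succ m ih =>
    have hsubsets : {T : Finset (EFml V (n + 1)) | ↑T ⊆ gameFormulas V m (n + 1)}.Finite :=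
      (ih (n + 1)).finite_subsets.preimage Finset.coe_injective.injOn
    exact (finite_literals n).union (hsubsets.image _)

theorem qr_le_of_mem_gameFormulas {m n : ℕ} {φ : EFml V n} (hφ : φ ∈ gameFormulas V m n) :
    φ.qr ≤ m := by
  induction m generalizing n with
  | zero => exact (qr_of_mem_literals hφ).le
  | succ m ih =>
    rcases hφ with hφ | ⟨T, hT, rfl⟩
    · exact (qr_of_mem_literals hφ).trans_le (Nat.zero_le _)
    · exact Nat.succ_le_succ (qr_conj_le fun φ hφ => ih (hT (Finset.mem_toList.1 hφ)))

end EFml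

open EFml

theorem partialIso_range_of_literals {n : ℕ} {c : Fin n → α × β}
    (h : ∀ φ ∈ literals V n, φ.Sat A (Prod.fst ∘ c) → φ.Sat B (Prod.snd ∘ c)) :
    PartialIso A B (Set.range c) where
  eq_iff := by
    rintro _ ⟨i, rfl⟩ _ ⟨j, rfl⟩
    exact ⟨h (.eq i j) (by simp [literals]),
      fun hB => by_contra fun hA => h (.ne i j) (by simp [literals]) hA hB⟩
  rel_iff := by
    intro r v hv
    choose w hw using hv
    obtain rfl : (fun i => c (w i)) = v := funext hw
    exact ⟨h (.rel r w) (by simp [literals]),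
      fun hB => by_contra fun hA => h (.nrel r w) (by simp [literals]) hA hB⟩

theorem duplicatorWins_range_of_gameFormulas [Finite V.Rel] {m n : ℕ} {c : Fin n → α × β}
    (h : ∀ φ ∈ gameFormulas V m n, φ.Sat A (Prod.fst ∘ c) → φ.Sat B (Prod.snd ∘ c)) :
    DuplicatorWins A B m (Set.range c) := by
  induction m generalizing n with
  | zero => exact partialIso_range_of_literals h
  | succ m ih =>
    refine ⟨partialIso_range_of_literals fun φ hφ => h φ (Or.inl hφ), fun a => ?_⟩
    classical
    let T : Finset (EFml V (n + 1)) :=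
      (finite_gameFormulas m (n + 1)).toFinset.filter (·.Sat A (Fin.snoc (Prod.fst ∘ c) a))
    have mem_T {φ} :
        φ ∈ T ↔ φ ∈ gameFormulas V m (n + 1) ∧ φ.Sat A (Fin.snoc (Prod.fst ∘ c) a) := by
      simp [T]
    have hA : (ex (conj T.toList)).Sat A (Prod.fst ∘ c) :=
      ⟨a, sat_conj.2 fun φ hφ => (mem_T.1 (Finset.mem_toList.1 hφ)).2⟩
    obtain ⟨b, hb⟩ := h _ (Or.inr ⟨T, fun φ hφ => (mem_T.1 hφ).1, rfl⟩) hA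
    have hpres : ∀ φ ∈ gameFormulas V m (n + 1),
        φ.Sat A (Prod.fst ∘ Fin.snoc c (a, b)) → φ.Sat B (Prod.snd ∘ Fin.snoc c (a, b)) := by
      simp only [Fin.comp_snoc]
      exact fun φ hφ hφA => sat_conj.1 hb φ (Finset.mem_toList.2 (mem_T.2 ⟨hφ, hφA⟩))
    refine ⟨b, ?_⟩
    rw [← Fin.range_snoc]
    exact ih hpres

theorem duplicatorWins_range_iff [Finite V.Rel] {m n : ℕ} {c : Fin n → α × β} :
    DuplicatorWins A B m (Set.range c) ↔
      ∀ φ : EFml V n, φ.qr ≤ m → φ.Sat A (Prod.fst ∘ c) → φ.Sat B (Prod.snd ∘ c) :=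
  ⟨fun h _ hφ => h.sat Set.mem_range_self hφ,
    fun h => duplicatorWins_range_of_gameFormulas fun φ hφ => h φ (qr_le_of_mem_gameFormulas hφ)⟩

theorem duplicatorWins_empty_iff [Finite V.Rel] {m : ℕ} :
    DuplicatorWins A B m ∅ ↔
      ∀ φ : EFml V 0, φ.qr ≤ m → φ.Sat A (fun i => i.elim0) → φ.Sat B (fun i => i.elim0) := by
  rw [← Set.range_eq_empty (Fin.elim0 : Fin 0 → α × β), duplicatorWins_range_iff,
    Subsingleton.elim (Prod.fst ∘ Fin.elim0) fun i : Fin 0 => (i.elim0 : α),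
    Subsingleton.elim (Prod.snd ∘ Fin.elim0) fun i : Fin 0 => (i.elim0 : β)]

/-! ### Coalgebras -/

namespace EObj

variable {X Y Z : EObj V}

theorem IsHom.comp {f : X.carrier → Y.carrier} {g : Y.carrier → Z.carrier}
    (hg : IsHom Y Z g) (hf : IsHom X Y f) : IsHom X Z (g ∘ f) :=
  ⟨fun r v h => hg.1 r _ (hf.1 r v h), fun x y h => hg.2.1 _ _ (hf.2.1 x y h),
    fun x h => hg.2.2.1 _ (hf.2.2.1 x h), fun x y h => hg.2.2.2 _ _ (hf.2.2.2 x y h)⟩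

/-- Down-sets of `X` are finite, so its order is generated by the covering relation. -/
theorem IsHom.le_of_le {j k : ℕ} {f : X.carrier → Y.carrier} (hf : IsHom X Y f)
    (hX : X.IsCoalg j) (hY : Y.IsCoalg k) {x y : X.carrier} (hxy : X.le x y) :
    Y.le (f x) (f y) := by
  obtain ⟨hrefl, htrans, hantisymm, hdown, -⟩ := hX
  let _ : PartialOrder X.carrier :=
    { le := X.le, le_refl := hrefl, le_trans := htrans, le_antisymm := hantisymm }
  let _ : LocallyFiniteOrder X.carrier :=
    .ofFiniteIcc fun _ b => (hdown b).1.subset fun _ hc => hc.2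
  have hcover : ∀ a b : X.carrier, a ⋖ b → Y.le (f a) (f b) := fun a b hab =>
    (hf.2.2.2 a b ⟨hab.le, hab.ne, fun _ hac hcb => hab.eq_or_eq hac hcb⟩).1
  induction le_iff_reflTransGen_covBy.1 (show x ≤ y from hxy) with
  | refl => exact hY.1 _
  | tail hxb hbc ih =>
    exact hY.2.1 _ _ _ (ih (le_iff_reflTransGen_covBy.2 hxb)) (hcover _ _ hbc)

/-- The substructure of `X` on `S`, with the induced order. -/
def restrict (X : EObj V) (S : Set X.carrier) : EObj V where
  carrier := S
  rel r v := X.rel r fun i => v i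
  ieq x y := X.ieq x y
  le x y := X.le x y

theorem IsCoalg.restrict {k : ℕ} (hX : X.IsCoalg k) (S : Set X.carrier) :
    (X.restrict S).IsCoalg k := by
  obtain ⟨hrefl, htrans, hantisymm, hdown, hadj⟩ := hX
  refine ⟨fun x => hrefl x.1, fun x y z => htrans x.1 y.1 z.1,
    fun x y hxy hyx => Subtype.ext (hantisymm x.1 y.1 hxy hyx), fun x => ?_, ?_⟩
  · obtain ⟨hfin, hcard, hchain⟩ := hdown x.1
    exact ⟨hfin.preimage Subtype.val_injective.injOn,
      (Set.ncard_le_ncard_of_injOn Subtype.val (fun _ h => h) Subtype.val_injective.injOn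
        hfin).trans hcard, fun y z => hchain y.1 z.1⟩
  · rintro x y ⟨hne, hxy⟩
    refine hadj x.1 y.1 ⟨fun h => hne (Subtype.ext h), hxy.imp_left ?_⟩
    rintro ⟨r, v, hv, ⟨i, rfl⟩, j, rfl⟩
    exact ⟨r, fun i => (v i).1, hv, ⟨i, rfl⟩, j, rfl⟩

theorem isEmb_restrict {S : Set X.carrier} (hS : ∀ x ∈ S, ∀ y, X.le y x → y ∈ S) :
    IsEmb (X.restrict S) X Subtype.val := by
  refine ⟨⟨fun _ _ h => h, fun _ _ h => h, fun x hx y hyx => ?_, fun x y hxy => ?_⟩,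
    Subtype.val_injective, fun _ _ h => h, fun _ _ h => h⟩
  · exact congrArg Subtype.val (hx ⟨y, hS x.1 x.2 y hyx⟩ hyx)
  · exact ⟨hxy.1, fun h => hxy.2.1 (Subtype.ext h), fun z hxz hzy =>
      (hxy.2.2 ⟨z, hS y.1 y.2 z hzy⟩ hxz hzy).imp (congrArg Subtype.val)
        (congrArg Subtype.val)⟩

end EObj

/-! ### The co-free coalgebra -/

theorem eq_of_prefix_or_prefix_of_length_eq {s t : List α} (h : s <+: t ∨ t <+: s)
    (hlen : s.length = t.length) : s = t :=
  h.elim (·.eq_of_length hlen) fun h => (h.eq_of_length hlen.symm).symm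

theorem exists_forall_prefix_of_chain {ι : Type*} [Finite ι] {k : ℕ} {v : ι → List α}
    (hchain : ∀ i j, v i <+: v j ∨ v j <+: v i) (hlen : ∀ i, (v i).length ≤ k) :
    ∃ l : List α, l.length ≤ k ∧ ∀ i, v i <+: l := by
  cases isEmpty_or_nonempty ι with
  | inl _ => exact ⟨[], Nat.zero_le k, isEmptyElim⟩
  | inr _ =>
    obtain ⟨j, hj⟩ := Finite.exists_max fun i => (v i).length
    refine ⟨v j, hlen j, fun i => (hchain i j).elim id fun h => ?_⟩
    rw [h.eq_of_length_le (hj i)]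

theorem getLast_mem_zip {s : List α} {t : List β} (hs : s ≠ []) (ht : t ≠ [])
    (hlen : s.length = t.length) : (s.getLast hs, t.getLast ht) ∈ s.zip t := by
  have hpos := List.length_pos_of_ne_nil hs
  refine List.mem_iff_getElem.2 ⟨s.length - 1, by grind, ?_⟩
  simp [List.getLast_eq_getElem, hlen]

theorem zip_prefix_zip {s s' : List α} {t t' : List β} (hs : s <+: s') (ht : t <+: t')
    (hlen : s.length = t.length) : s.zip t <+: s'.zip t' := by
  obtain ⟨u, rfl⟩ := hs
  obtain ⟨v, rfl⟩ := ht
  exact List.zip_append hlen ▸ List.prefix_append _ _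

namespace FE

variable {k : ℕ}

/-- The counit `F_k^I(A) → J(A)`: the last element of a sequence. -/
def last (s : (FE V k A).carrier) : α := s.1.getLast s.2.1

theorem injOn_length_setOf_prefix (l : List α) :
    {t : (FE V k A).carrier | t.1 <+: l}.InjOn fun t => t.1.length := fun _ hs _ ht h =>
  Subtype.ext (eq_of_prefix_or_prefix_of_length_eq (List.prefix_or_prefix_of_prefix hs ht) h)

theorem finite_setOf_prefix (l : List α) : {t : (FE V k A).carrier | t.1 <+: l}.Finite :=
  .of_injOn (fun t _ => t.2.2) (injOn_length_setOf_prefix l) (Set.finite_Iic k)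

theorem isCoalg (A : Str V α) : (FE V k A).IsCoalg k := by
  refine ⟨fun _ => List.prefix_rfl, fun _ _ _ => List.IsPrefix.trans,
    fun _ _ hst hts => Subtype.ext (hst.eq_of_length_le (List.IsPrefix.length_le hts)),
    fun s => ⟨finite_setOf_prefix s.1, ?_, fun _ _ => List.prefix_or_prefix_of_prefix⟩, ?_⟩
  · refine (Set.ncard_le_ncard_of_injOn _ (fun t _ => t.2.2) (injOn_length_setOf_prefix s.1)
      (Set.finite_Iic k)).trans_eq ?_
    rw [← Finset.coe_Iic, Set.ncard_coe_finset, Nat.card_Iic]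
  · rintro _ _ ⟨-, ⟨_, _, hv, ⟨i, rfl⟩, j, rfl⟩ | hst | hts⟩
    · exact hv.1 i j
    · exact hst.1
    · exact hts.1.symm

theorem isRoot_iff {s : (FE V k A).carrier} : (FE V k A).IsRoot s ↔ s.1.length = 1 := by
  constructor
  · obtain ⟨l, hl, hk⟩ := s
    obtain ⟨a, l, rfl⟩ := List.exists_cons_of_ne_nil hl
    intro h
    have hroot : [a] = a :: l := congrArg Subtype.val
      (h ⟨[a], List.cons_ne_nil _ _, (Nat.succ_le_succ (Nat.zero_le _)).trans hk⟩ ⟨l, rfl⟩)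
    exact congrArg List.length hroot.symm
  · intro h t hts
    have ht := List.length_pos_of_ne_nil t.2.1
    exact Subtype.ext (List.IsPrefix.eq_of_length_le hts (by lia))

theorem cover_iff {s t : (FE V k A).carrier} :
    (FE V k A).Cover s t ↔ s.1 <+: t.1 ∧ t.1.length = s.1.length + 1 := by
  constructor
  · obtain ⟨s, hs, _⟩ := s
    obtain ⟨t, _, ht⟩ := t
    rintro ⟨⟨u, rfl : s ++ u = t⟩, hne, hmin⟩
    refine ⟨List.prefix_append s u, ?_⟩
    rcases u with _ | ⟨a, u⟩
    · exact absurd (Subtype.ext (List.append_nil s).symm) hne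
    · have hlen : (s ++ [a]).length ≤ k := by grind
      rcases hmin ⟨s ++ [a], by simp, hlen⟩ ⟨[a], rfl⟩ ⟨u, by simp⟩ with h | h
      · exact absurd (congrArg Subtype.val h) (by simp)
      · simpa using congrArg (fun x => x.1.length) h.symm
  · rintro ⟨hst, hlen⟩
    refine ⟨hst, fun h => by simp [h] at hlen, fun z hsz hzt => ?_⟩
    have hz : z.1.length ≤ s.1.length ∨ t.1.length ≤ z.1.length := by lia
    exact hz.imp (fun h => Subtype.ext (List.IsPrefix.eq_of_length_le hsz h).symm)
      fun h => Subtype.ext (List.IsPrefix.eq_of_length_le hzt h)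

/-! ### Pathwise embeddings and the game -/

/-- The pairs of moves and answers in the history `l`, where `f` is read as a strategy: the answer
to the last move of a history `t` is the last element of `f t`. -/
def playedPairs (f : (FE V k A).carrier → (FE V k B).carrier) (l : List α) : Set (α × β) :=
  (fun t => (last t, last (f t))) '' {t | t.1 <+: l}

variable {f : (FE V k A).carrier → (FE V k B).carrier}

theorem mem_playedPairs {l : List α} {t : (FE V k A).carrier} (ht : t.1 <+: l) :
    (last t, last (f t)) ∈ playedPairs f l :=
  ⟨t, ht, rfl⟩

theorem playedPairs_nil : playedPairs f [] = ∅ :=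
  Set.image_eq_empty.2 (Set.eq_empty_of_forall_notMem fun t ht => t.2.1 (List.prefix_nil.1 ht))

theorem playedPairs_concat {l : List α} {a : α} {u : (FE V k A).carrier} (hu : u.1 = l ++ [a]) :
    playedPairs f (l ++ [a]) = insert (a, last (f u)) (playedPairs f l) := by
  have hprefixes : {t : (FE V k A).carrier | t.1 <+: l ++ [a]} = insert u {t | t.1 <+: l} := by
    ext t
    exact List.prefix_concat_iff.trans (or_congr_left (hu ▸ Subtype.ext_iff.symm))
  have hlast : last u = a := by simp [last, hu]
  rw [playedPairs, hprefixes, Set.image_insert_eq, hlast, playedPairs]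

theorem partialIso_playedPairs (hf : EObj.IsPWEmb k (FE V k A) (FE V k B) f) (l : List α) :
    PartialIso A B (playedPairs f l) := by
  have hchain : ∀ s t : (FE V k A).carrier, s.1 <+: l → t.1 <+: l → s.1 <+: t.1 ∨ t.1 <+: s.1 :=
    fun _ _ => List.prefix_or_prefix_of_prefix
  have hfchain : ∀ s t : (FE V k A).carrier, s.1 <+: l → t.1 <+: l →
      (f s).1 <+: (f t).1 ∨ (f t).1 <+: (f s).1 := fun s t hs ht =>
    (hchain s t hs ht).imp (hf.1.le_of_le (isCoalg A) (isCoalg B))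
      (hf.1.le_of_le (isCoalg A) (isCoalg B))
  have hemb : EObj.IsEmb ((FE V k A).restrict {t | t.1 <+: l}) (FE V k B) fun t => f t.1 :=
    hf.2 _ ((isCoalg A).restrict _) ⟨finite_setOf_prefix l, fun s t => hchain s.1 t.1 s.2 t.2⟩
      Subtype.val (EObj.isEmb_restrict fun _ ht _ hst => List.IsPrefix.trans hst ht)
  refine ⟨?_, fun r v hv => ?_⟩
  · rintro _ ⟨s, hs, rfl⟩ _ ⟨t, ht, rfl⟩
    exact ⟨fun h => (hemb.1.2.1 ⟨s, hs⟩ ⟨t, ht⟩ ⟨hchain s t hs ht, h⟩).2,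
      fun h => (hemb.2.2.2 ⟨s, hs⟩ ⟨t, ht⟩ ⟨hfchain s t hs ht, h⟩).2⟩
  · choose w hw hwv using hv
    obtain rfl := funext hwv
    exact ⟨fun h => (hemb.1.1 r (fun i => ⟨w i, hw i⟩)
        ⟨fun i j => hchain _ _ (hw i) (hw j), h⟩).2,
      fun h => (hemb.2.2.1 r (fun i => ⟨w i, hw i⟩)
        ⟨fun i j => hfchain _ _ (hw i) (hw j), h⟩).2⟩

theorem duplicatorWins_playedPairs (hf : EObj.IsPWEmb k (FE V k A) (FE V k B) f) {m : ℕ}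
    {l : List α} (hl : l.length + m ≤ k) : DuplicatorWins A B m (playedPairs f l) := by
  induction m generalizing l with
  | zero => exact partialIso_playedPairs hf l
  | succ m ih =>
    refine ⟨partialIso_playedPairs hf l, fun a => ?_⟩
    have hla : (l ++ [a]).length + m ≤ k := by grind
    let u : (FE V k A).carrier :=
      ⟨l ++ [a], List.concat_ne_nil a l, (Nat.le_add_right _ m).trans hla⟩
    exact ⟨last (f u), playedPairs_concat (u := u) rfl ▸ ih hla⟩

theorem last_eq_last_iff (hiso : ∀ l, l.length ≤ k → PartialIso A B (playedPairs f l))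
    {s t : (FE V k A).carrier} (h : s.1 <+: t.1 ∨ t.1 <+: s.1) :
    last s = last t ↔ last (f s) = last (f t) := by
  obtain ⟨l, hl, hs, ht⟩ : ∃ l, l.length ≤ k ∧ s.1 <+: l ∧ t.1 <+: l :=
    h.elim (fun h => ⟨t.1, t.2.2, h, List.prefix_rfl⟩) fun h => ⟨s.1, s.2.2, List.prefix_rfl, h⟩
  exact (hiso l hl).eq_iff _ (mem_playedPairs hs) _ (mem_playedPairs ht)

theorem rel_last_iff (hiso : ∀ l, l.length ≤ k → PartialIso A B (playedPairs f l))
    {r : V.Rel} {v : Fin (V.ar r) → (FE V k A).carrier}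
    (h : ∀ i j, (v i).1 <+: (v j).1 ∨ (v j).1 <+: (v i).1) :
    (A.rel r fun i => last (v i)) ↔ B.rel r fun i => last (f (v i)) := by
  obtain ⟨l, hl, hv⟩ := exists_forall_prefix_of_chain h fun i => (v i).2.2
  exact (hiso l hl).rel_iff r _ fun i => mem_playedPairs (hv i)

theorem isPWEmb_of_partialIso (hiso : ∀ l, l.length ≤ k → PartialIso A B (playedPairs f l))
    (hlen : ∀ s, (f s).1.length = s.1.length)
    (hmono : ∀ s t, s.1 <+: t.1 → (f s).1 <+: (f t).1) :
    EObj.IsPWEmb k (FE V k A) (FE V k B) f := by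
  have hhom : EObj.IsHom (FE V k A) (FE V k B) f := by
    refine ⟨fun r v ⟨hv, h⟩ => ?_, fun s t ⟨hst, h⟩ => ?_, fun s hs => ?_, fun s t hst => ?_⟩
    · exact ⟨fun i j => (hv i j).imp (hmono _ _) (hmono _ _), (rel_last_iff hiso hv).1 h⟩
    · exact ⟨hst.imp (hmono _ _) (hmono _ _), (last_eq_last_iff hiso hst).1 h⟩
    · rwa [isRoot_iff, hlen, ← isRoot_iff]
    · rw [cover_iff] at hst ⊢
      exact ⟨hmono _ _ hst.1, by rw [hlen, hlen, hst.2]⟩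
  refine ⟨hhom, fun P hP hpath m hm => ?_⟩
  have hchain : ∀ x y, (m x).1 <+: (m y).1 ∨ (m y).1 <+: (m x).1 := fun x y =>
    (hpath.2 x y).imp (hm.1.le_of_le hP (isCoalg A)) (hm.1.le_of_le hP (isCoalg A))
  refine ⟨hhom.comp hm.1, fun x y hxy => hm.2.1 ?_, fun r v h => ?_, fun x y h => ?_⟩
  · have hlenxy : (m x).1.length = (m y).1.length :=
      (hlen (m x)).symm.trans ((congrArg (fun s => s.1.length) hxy).trans (hlen (m y)))
    exact Subtype.ext (eq_of_prefix_or_prefix_of_length_eq (hchain x y) hlenxy)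
  · exact hm.2.2.1 r v
      ⟨fun _ _ => hchain _ _, (rel_last_iff hiso fun _ _ => hchain _ _).2 h.2⟩
  · exact hm.2.2.2 x y ⟨hchain x y, (last_eq_last_iff hiso (hchain x y)).2 h.2⟩

end FE

/-- Duplicator's answers to a sequence of moves of Spoiler, following a winning strategy. Moves
beyond the number of rounds are left unanswered. -/
noncomputable def DuplicatorWins.answers :
    ∀ {m : ℕ} {p : Set (α × β)}, DuplicatorWins A B m p → List α → List β
  | 0, _, _, _ => []
  | _ + 1, _, _, [] => []
  | _ + 1, _, h, a :: l => (h.2 a).choose :: (h.2 a).choose_spec.answers l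

namespace DuplicatorWins

variable {m : ℕ} {p : Set (α × β)}

theorem length_answers (h : DuplicatorWins A B m p) {l : List α} (hl : l.length ≤ m) :
    (h.answers l).length = l.length := by
  induction m generalizing p l with
  | zero => simp_all [answers]
  | succ m ih =>
    cases l with
    | nil => rfl
    | cons a l => exact congrArg (· + 1) (ih _ (Nat.le_of_succ_le_succ hl))

theorem answers_prefix_answers (h : DuplicatorWins A B m p) {s t : List α} (hst : s <+: t) :
    h.answers s <+: h.answers t := by
  induction m generalizing p s t with
  | zero => exact List.prefix_rfl
  | succ m ih =>
    cases s with
    | nil => exact List.nil_prefix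
    | cons a s =>
      obtain ⟨t, rfl⟩ := hst
      exact List.cons_prefix_cons.2 ⟨rfl, ih _ (List.prefix_append s t)⟩

theorem partialIso_zip_answers (h : DuplicatorWins A B m p) (l : List α) :
    PartialIso A B (p ∪ {x | x ∈ l.zip (h.answers l)}) := by
  induction m generalizing p l with
  | zero => simpa [answers] using h.partialIso
  | succ m ih =>
    cases l with
    | nil => simpa using h.partialIso
    | cons a l =>
      refine (ih (h.2 a).choose_spec l).mono ?_
      rintro x (hx | hx)
      · exact .inl (.inr hx)
      · exact (List.mem_cons.1 hx).imp .inl id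

theorem exists_isPWEmb {k : ℕ} (h : DuplicatorWins A B k ∅) :
    ∃ f, EObj.IsPWEmb k (FE V k A) (FE V k B) f := by
  have hlen (s : (FE V k A).carrier) : (h.answers s.1).length = s.1.length :=
    h.length_answers s.2.2
  let f (s : (FE V k A).carrier) : (FE V k B).carrier :=
    ⟨h.answers s.1, List.ne_nil_of_length_pos (hlen s ▸ List.length_pos_of_ne_nil s.2.1),
      hlen s ▸ s.2.2⟩
  have hplayed (l : List α) : FE.playedPairs f l ⊆ {x | x ∈ l.zip (h.answers l)} := by
    rintro _ ⟨t, ht, rfl⟩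
    refine (zip_prefix_zip ht (h.answers_prefix_answers ht) (hlen t).symm).subset ?_
    exact getLast_mem_zip _ _ (hlen t).symm
  exact ⟨f, FE.isPWEmb_of_partialIso
    (fun l _ => (h.partialIso_zip_answers l).mono ((hplayed l).trans Set.subset_union_right))
    hlen fun _ _ => h.answers_prefix_answers⟩

end DuplicatorWins

theorem duplicatorWins_empty_iff_exists_isPWEmb {k : ℕ} :
    DuplicatorWins A B k ∅ ↔ ∃ f, EObj.IsPWEmb k (FE V k A) (FE V k B) f := by
  refine ⟨fun h => h.exists_isPWEmb, fun ⟨f, hf⟩ => ?_⟩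
  rw [← FE.playedPairs_nil (f := f)]
  exact FE.duplicatorWins_playedPairs hf (Nat.zero_add k).le

end

/-- `A` and `B` satisfy the same sentences of `∃FO_k` if, and only if,
there exist pathwise embeddings `F_k^I(A) → F_k^I(B)` and `F_k^I(B) → F_k^I(A)`
in `EM(E_k^I)`. -/
theorem existential_EF_equivalence_iff_pathwise_embeddings
    (V : Vocab) [Finite V.Rel] (har : ∀ r : V.Rel, V.ar r ≠ 0)
    {α β : Type} (A : Str V α) (B : Str V β) (k : ℕ) :
    (∀ φ : EFml V 0, φ.qr ≤ k →
        (φ.Sat A (fun i => i.elim0) ↔ φ.Sat B (fun i => i.elim0))) ↔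
      ((∃ f, EObj.IsPWEmb k (FE V k A) (FE V k B) f) ∧
        (∃ g, EObj.IsPWEmb k (FE V k B) (FE V k A) g)) := by
  simp only [← duplicatorWins_empty_iff_exists_isPWEmb, duplicatorWins_empty_iff]
  exact ⟨fun h => ⟨fun φ hφ => (h φ hφ).1, fun φ hφ => (h φ hφ).2⟩,
    fun ⟨hAB, hBA⟩ φ hφ => ⟨hAB φ hφ, hBA φ hφ⟩⟩
end

section
/- For all σ-structures A and B and every positive integer k, A and B satisfy the same sentences of ∃L^k if, and only if, there exist pathwise embeddings F_k^I(A) → F_k^I(B) and F_k^I(B) → F_k^I(A) in EM(P_k^I). -/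
/-- Existential formulas of the `k`-variable fragment `L^k` of the infinitary logic
`L_{∞,ω}(σ)`: formulas using only the variables `x_1, …, x_k`, with set-sized
conjunctions and disjunctions, no universal quantifiers, and negations only on atomic
formulas. -/
inductive LFml (V : Vocab) (k : ℕ) : Type 1
  | rel (r : V.Rel) (v : Fin (V.ar r) → Fin k) : LFml V k
  | nrel (r : V.Rel) (v : Fin (V.ar r) → Fin k) : LFml V k
  | eq (i j : Fin k) : LFml V k
  | ne (i j : Fin k) : LFml V k
  | iand (ι : Type) (f : ι → LFml V k) : LFml V k
  | ior (ι : Type) (f : ι → LFml V k) : LFml V k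
  | ex (i : Fin k) (φ : LFml V k) : LFml V k

namespace LFml

/-- Free variables. -/
def freeVars {V : Vocab} {k : ℕ} : LFml V k → Set (Fin k)
  | .rel _ v => Set.range v
  | .nrel _ v => Set.range v
  | .eq i j => {i, j}
  | .ne i j => {i, j}
  | .iand _ f => ⋃ x, freeVars (f x)
  | .ior _ f => ⋃ x, freeVars (f x)
  | .ex i φ => freeVars φ \ {i}

/-- Satisfaction, relative to a partial environment (so that sentences have a
well-defined truth value in every, possibly empty, structure). -/
def Sat {V : Vocab} {k : ℕ} {α : Type} (M : Str V α) :
    LFml V k → (Fin k → Option α) → Prop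
  | .rel r v, e => ∃ g : Fin (V.ar r) → α, (∀ i, e (v i) = some (g i)) ∧ M.rel r g
  | .nrel r v, e => ∃ g : Fin (V.ar r) → α, (∀ i, e (v i) = some (g i)) ∧ ¬ M.rel r g
  | .eq i j, e => ∃ x : α, e i = some x ∧ e j = some x
  | .ne i j, e => ∃ x y : α, e i = some x ∧ e j = some y ∧ x ≠ y
  | .iand _ f, e => ∀ x, Sat M (f x) e
  | .ior _ f, e => ∃ x, Sat M (f x) e
  | .ex i φ, e => ∃ a : α, Sat M φ (Function.update e i (some a))

end LFml
/-- An object datum for the Eilenberg–Moore category `EM(P_k^I)` of the pebbling comonad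
over `σ^I = σ ∪ {I}`: a `σ`-structure with an interpretation `ieq` of the fresh binary
relation symbol `I`, a (forest) order and a pebbling function. -/
structure PObj (V : Vocab) (k : ℕ) : Type 1 where
  carrier : Type
  rel : ∀ r : V.Rel, (Fin (V.ar r) → carrier) → Prop
  ieq : carrier → carrier → Prop
  le : carrier → carrier → Prop
  peb : carrier → Fin k

namespace PObj

variable {V : Vocab} {k : ℕ}

/-- Gaifman adjacency, with respect to all relations of `σ ∪ {I}`. -/
def Adj (X : PObj V k) (x y : X.carrier) : Prop :=
  x ≠ y ∧ ((∃ r v, X.rel r v ∧ (∃ i, v i = x) ∧ (∃ j, v j = y)) ∨ X.ieq x y ∨ X.ieq y x)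

/-- The covering relation of the order of `X`. -/
def Cover (X : PObj V k) (x y : X.carrier) : Prop :=
  X.le x y ∧ x ≠ y ∧ ∀ z, X.le x z → X.le z y → z = x ∨ z = y

/-- Roots, i.e. minimal elements of the forest order. -/
def IsRoot (X : PObj V k) (x : X.carrier) : Prop := ∀ y, X.le y x → y = x

/-- `X` is (the datum of) a coalgebra for `P_k^I`: a `k`-pebble forest-ordered
`σ^I`-structure. -/
def IsCoalg (X : PObj V k) : Prop :=
  (∀ x, X.le x x) ∧ (∀ x y z, X.le x y → X.le y z → X.le x z) ∧
  (∀ x y, X.le x y → X.le y x → x = y) ∧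
  (∀ x : X.carrier, {y | X.le y x}.Finite ∧
    ∀ y z, X.le y x → X.le z x → X.le y z ∨ X.le z y) ∧
  (∀ x y, X.Adj x y → X.le x y ∨ X.le y x) ∧
  (∀ x y, X.Adj x y → X.le x y → x ≠ y →
    ∀ z, X.le x z → x ≠ z → X.le z y → X.peb x ≠ X.peb z)

/-- Morphisms of `EM(P_k^I)`: homomorphisms of `σ^I`-structures that are forest
morphisms and preserve the pebbling functions. -/
def IsHom (X Y : PObj V k) (f : X.carrier → Y.carrier) : Prop :=
  (∀ r v, X.rel r v → Y.rel r fun i => f (v i)) ∧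
  (∀ x y, X.ieq x y → Y.ieq (f x) (f y)) ∧
  (∀ x, X.IsRoot x → Y.IsRoot (f x)) ∧
  (∀ x y, X.Cover x y → Y.Cover (f x) (f y)) ∧
  (∀ x, Y.peb (f x) = X.peb x)

/-- Embeddings: morphisms that are injective and reflect all relations. -/
def IsEmb (X Y : PObj V k) (f : X.carrier → Y.carrier) : Prop :=
  IsHom X Y f ∧ Function.Injective f ∧
  (∀ r v, (Y.rel r fun i => f (v i)) → X.rel r v) ∧
  (∀ x y, Y.ieq (f x) (f y) → X.ieq x y)

/-- Paths: objects whose forest order is finite and linear. -/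
def IsPath (X : PObj V k) : Prop :=
  Finite X.carrier ∧ ∀ x y : X.carrier, X.le x y ∨ X.le y x

/-- Pathwise embeddings. -/
def IsPWEmb (X Y : PObj V k) (f : X.carrier → Y.carrier) : Prop :=
  IsHom X Y f ∧ ∀ P : PObj V k, IsCoalg P → IsPath P →
    ∀ m : P.carrier → X.carrier, IsEmb P X m → IsEmb P Y fun p => f (m p)

/-- Open morphisms: every commutative square of path embeddings over `f` admits a
diagonal filler. -/
def IsOpen (X Y : PObj V k) (f : X.carrier → Y.carrier) : Prop :=
  ∀ P Q : PObj V k, IsCoalg P → IsPath P → IsCoalg Q → IsPath Q →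
    ∀ (i : P.carrier → Q.carrier) (m : P.carrier → X.carrier)
      (n : Q.carrier → Y.carrier),
      IsEmb P Q i → IsEmb P X m → IsEmb Q Y n → (∀ x, n (i x) = f (m x)) →
      ∃ d : Q.carrier → X.carrier, IsHom Q X d ∧ (∀ x, d (i x) = m x) ∧ ∀ q, f (d q) = n q

end PObj
/-- The co-free coalgebra `F_k^I(A)` for the pebbling comonad on `J(A)`: finite
non-empty sequences of moves `(p_i, a_i)`, ordered by the prefix order.  A tuple of
sequences is related iff the sequences are pairwise comparable, the pebble index of the
last move of a prefix does not reappear in the corresponding suffix, and the elements of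
the last moves are related in `J(A)`; the fresh relation `I` is interpreted accordingly,
with equality of the elements of the last moves. -/
def FP (V : Vocab) (k : ℕ) {α : Type} (A : Str V α) : PObj V k where
  carrier := {l : List (Fin k × α) // l ≠ []}
  rel r v :=
    (∀ i j, (v i).1 <+: (v j).1 ∨ (v j).1 <+: (v i).1) ∧
    (∀ i j w, (v j).1 = (v i).1 ++ w →
      ∀ m ∈ w, m.1 ≠ ((v i).1.getLast (v i).2).1) ∧
    A.rel r fun i => ((v i).1.getLast (v i).2).2
  ieq s t :=
    ((s.1 <+: t.1) ∨ (t.1 <+: s.1)) ∧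
    (∀ w, t.1 = s.1 ++ w → ∀ m ∈ w, m.1 ≠ (s.1.getLast s.2).1) ∧
    (∀ w, s.1 = t.1 ++ w → ∀ m ∈ w, m.1 ≠ (t.1.getLast t.2).1) ∧
    (s.1.getLast s.2).2 = (t.1.getLast t.2).2
  le s t := s.1 <+: t.1
  peb s := (s.1.getLast s.2).1

/-!
A morphism `F_k^I(A) → F_k^I(B)` is a strategy of Duplicator in the existential `k`-pebble game:
it answers every play in `A` by a play in `B`, move by move and pebble by pebble.  The elements
of a chain of plays on which a relation can hold are exactly those currently covered by pebbles
at some play `s`, so the morphism is a pathwise embedding iff at every play `s` the pebbled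
positions in `A` and `B` are partially isomorphic.  Such a winning strategy transfers existential
formulas by induction on the formula.  Conversely, Duplicator wins by maintaining the invariant
that all existential formulas true at the position in `A` hold at the position in `B`: if every
answer `b` to a move `a` violated it through a formula `φ b`, then `∃ x_p, ⋀ b, φ b` would
already violate it before the move.
-/

namespace PObj

variable {V : Vocab} {k : ℕ} {X Y Z : PObj V k}

/-- Comparability in the forest order. -/
def Comparable (X : PObj V k) (x y : X.carrier) : Prop := X.le x y ∨ X.le y x

/-- The forest order of a coalgebra, as an order of Mathlib. -/
abbrev IsCoalg.partialOrder (hX : X.IsCoalg) : PartialOrder X.carrier where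
  le := X.le
  le_refl := hX.1
  le_trans := hX.2.1
  le_antisymm := hX.2.2.1

theorem IsCoalg.transGen_cover (hX : X.IsCoalg) {x y : X.carrier} (hle : X.le x y) (hne : x ≠ y) :
    Relation.TransGen X.Cover x y := by
  let := hX.partialOrder
  let : LocallyFiniteOrder X.carrier :=
    .ofFiniteIcc fun _ b => (hX.2.2.2.1 b).1.subset fun _ hz => hz.2
  have hlt : x < y := lt_of_le_of_ne hle hne
  exact (lt_iff_transGen_covBy.1 hlt).lift id fun _ _ hcov =>
    ⟨hcov.le, hcov.ne, fun _ => hcov.eq_or_eq⟩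

namespace IsHom

variable {f : X.carrier → Y.carrier} {g : Y.carrier → Z.carrier}

theorem comp (hg : IsHom Y Z g) (hf : IsHom X Y f) : IsHom X Z fun x => g (f x) :=
  ⟨fun r v h => hg.1 r _ (hf.1 r v h), fun x y h => hg.2.1 _ _ (hf.2.1 x y h),
    fun x h => hg.2.2.1 _ (hf.2.2.1 x h), fun x y h => hg.2.2.2.1 _ _ (hf.2.2.2.1 x y h),
    fun x => (hg.2.2.2.2 _).trans (hf.2.2.2.2 x)⟩

theorem strictMono (hX : X.IsCoalg) (hY : Y.IsCoalg) (hf : IsHom X Y f) {x y : X.carrier}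
    (hle : X.le x y) (hne : x ≠ y) : Y.le (f x) (f y) ∧ f x ≠ f y := by
  let := hY.partialOrder
  obtain ⟨-, -, -, hcover, -⟩ := hf
  have hgen := hX.transGen_cover hle hne
  have hlt : f x < f y := by
    clear hle hne
    induction hgen with
    | single h => exact lt_of_le_of_ne (hcover _ _ h).1 (hcover _ _ h).2.1
    | tail _ h ih => exact ih.trans (lt_of_le_of_ne (hcover _ _ h).1 (hcover _ _ h).2.1)
  exact ⟨hlt.le, hlt.ne⟩

theorem mono (hX : X.IsCoalg) (hY : Y.IsCoalg) (hf : IsHom X Y f) {x y : X.carrier}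
    (hle : X.le x y) : Y.le (f x) (f y) := by
  by_cases hxy : x = y
  · exact hxy ▸ hY.1 _
  · exact (hf.strictMono hX hY hle hxy).1

theorem comparable (hX : X.IsCoalg) (hY : Y.IsCoalg) (hf : IsHom X Y f) {x y : X.carrier}
    (h : X.Comparable x y) : Y.Comparable (f x) (f y) :=
  h.imp (hf.mono hX hY) (hf.mono hX hY)

theorem injective_of_isPath (hX : X.IsCoalg) (hY : Y.IsCoalg) (hf : IsHom X Y f)
    (hpath : X.IsPath) : Function.Injective f := by
  intro x y hfxy
  by_contra hne
  rcases hpath.2 x y with hle | hle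
  · exact (hf.strictMono hX hY hle hne).2 hfxy
  · exact (hf.strictMono hX hY hle (Ne.symm hne)).2 hfxy.symm

end IsHom

/-- The substructure of `X` induced on a set `S`, with the induced order and pebbling. -/
def restrict (X : PObj V k) (S : Set X.carrier) : PObj V k where
  carrier := S
  rel r v := X.rel r fun i => (v i).1
  ieq x y := X.ieq x.1 y.1
  le x y := X.le x.1 y.1
  peb x := X.peb x.1

variable {S : Set X.carrier}

theorem Adj.of_restrict {x y : S} (h : (X.restrict S).Adj x y) : X.Adj x.1 y.1 := by
  obtain ⟨hne, ⟨r, v, hr, ⟨i, rfl⟩, ⟨j, rfl⟩⟩ | hieq⟩ := h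
  · exact ⟨fun h => hne (Subtype.ext h), .inl ⟨r, _, hr, ⟨i, rfl⟩, ⟨j, rfl⟩⟩⟩
  · exact ⟨fun h => hne (Subtype.ext h), .inr hieq⟩

theorem IsCoalg.restrict (hX : X.IsCoalg) : (X.restrict S).IsCoalg := by
  obtain ⟨hrefl, htrans, hanti, hforest, hadj, hpeb⟩ := hX
  have val_ne {x y : S} (h : x ≠ y) : x.1 ≠ y.1 := fun h' => h (Subtype.ext h')
  exact ⟨fun x => hrefl x.1, fun x y z => htrans x.1 y.1 z.1,
    fun x y hxy hyx => Subtype.ext (hanti x.1 y.1 hxy hyx),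
    fun x => ⟨(hforest x.1).1.preimage Subtype.val_injective.injOn,
      fun y z => (hforest x.1).2 y.1 z.1⟩,
    fun x y h => hadj x.1 y.1 (Adj.of_restrict h),
    fun x y h hxy hne z hxz hne' => hpeb x.1 y.1 (Adj.of_restrict h) hxy (val_ne hne) z.1 hxz
      (val_ne hne')⟩

theorem isEmb_restrict (hS : ∀ x ∈ S, ∀ y, X.le y x → y ∈ S) :
    IsEmb (X.restrict S) X Subtype.val := by
  refine ⟨⟨fun _ _ h => h, fun _ _ h => h, ?_, ?_, fun _ => rfl⟩, Subtype.val_injective,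
    fun _ _ h => h, fun _ _ h => h⟩
  · intro x hx y hyx
    exact congrArg Subtype.val (hx ⟨y, hS x.1 x.2 y hyx⟩ hyx)
  · rintro x y ⟨hle, hne, hcov⟩
    refine ⟨hle, fun h => hne (Subtype.ext h), fun z hxz hzy => ?_⟩
    exact (hcov ⟨z, hS y.1 y.2 z hzy⟩ hxz hzy).imp (congrArg Subtype.val) (congrArg Subtype.val)

theorem IsCoalg.exists_path_of_chain (hX : X.IsCoalg) {ι : Type*} [Finite ι]
    {v : ι → X.carrier} (hv : ∀ i j, X.Comparable (v i) (v j)) :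
    ∃ P : PObj V k, P.IsCoalg ∧ P.IsPath ∧
      ∃ m : P.carrier → X.carrier, IsEmb P X m ∧ ∀ i, ∃ p, m p = v i := by
  let S : Set X.carrier := ⋃ i, {y | X.le y (v i)}
  have hchain {x y : X.carrier} (hx : x ∈ S) (hy : y ∈ S) : X.Comparable x y := by
    obtain ⟨i, hi⟩ := Set.mem_iUnion.1 hx
    obtain ⟨j, hj⟩ := Set.mem_iUnion.1 hy
    rcases hv i j with hij | hji
    · exact (hX.2.2.2.1 (v j)).2 x y (hX.2.1 _ _ _ hi hij) hj
    · exact (hX.2.2.2.1 (v i)).2 x y hi (hX.2.1 _ _ _ hj hji)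
  have hlower : ∀ x ∈ S, ∀ y, X.le y x → y ∈ S := by
    intro x hx y hyx
    obtain ⟨i, hi⟩ := Set.mem_iUnion.1 hx
    exact Set.mem_iUnion.2 ⟨i, hX.2.1 _ _ _ hyx hi⟩
  have hfinite : S.Finite := Set.finite_iUnion fun i => (hX.2.2.2.1 (v i)).1
  exact ⟨X.restrict S, hX.restrict, ⟨hfinite.to_subtype, fun x y => hchain x.2 y.2⟩,
    Subtype.val, isEmb_restrict hlower,
    fun i => ⟨⟨v i, Set.mem_iUnion.2 ⟨i, hX.1 _⟩⟩, rfl⟩⟩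

/-- `f` reflects all relations of `σ ∪ {I}` on tuples that are chains of the forest order. -/
structure ReflectsOnChains (X Y : PObj V k) (f : X.carrier → Y.carrier) : Prop where
  rel : ∀ (r : V.Rel) (v : Fin (V.ar r) → X.carrier), (∀ i j, X.Comparable (v i) (v j)) →
    (Y.rel r fun i => f (v i)) → X.rel r v
  ieq : ∀ x y : X.carrier, X.Comparable x y → Y.ieq (f x) (f y) → X.ieq x y

variable {f : X.carrier → Y.carrier}

theorem IsPWEmb.reflectsOnChains (hX : X.IsCoalg) (hf : IsPWEmb X Y f) :
    ReflectsOnChains X Y f where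
  rel r v hv hr := by
    obtain ⟨P, hP, hpath, m, hm, hrange⟩ := hX.exists_path_of_chain hv
    choose p hp using hrange
    obtain rfl : (fun i => m (p i)) = v := funext hp
    exact hm.1.1 r p ((hf.2 P hP hpath m hm).2.2.1 r p hr)
  ieq x y hxy hieq := by
    have hchain : ∀ i j : Bool, X.Comparable (cond i x y) (cond j x y) := by
      rintro (_ | _) (_ | _)
      exacts [.inl (hX.1 y), hxy.symm, hxy, .inl (hX.1 x)]
    obtain ⟨P, hP, hpath, m, hm, hrange⟩ := hX.exists_path_of_chain hchain
    obtain ⟨p, rfl⟩ := hrange true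
    obtain ⟨q, rfl⟩ := hrange false
    exact hm.1.2.1 p q ((hf.2 P hP hpath m hm).2.2.2 p q hieq)

theorem isPWEmb_iff (hX : X.IsCoalg) (hY : Y.IsCoalg) :
    IsPWEmb X Y f ↔ IsHom X Y f ∧ ReflectsOnChains X Y f := by
  refine ⟨fun hf => ⟨hf.1, hf.reflectsOnChains hX⟩, fun ⟨hf, hrefl⟩ => ⟨hf, ?_⟩⟩
  rintro P hP hpath m ⟨hm, -, hmrel, hmieq⟩
  have hchain (p q : P.carrier) : X.Comparable (m p) (m q) := hm.comparable hP hX (hpath.2 p q)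
  exact ⟨hf.comp hm, (hf.comp hm).injective_of_isPath hP hY hpath,
    fun r v hr => hmrel r v (hrefl.rel r _ (fun i j => hchain (v i) (v j)) hr),
    fun p q hpq => hmieq p q (hrefl.ieq _ _ (hchain p q) hpq)⟩

end PObj

/-- Non-empty sequences of moves: the carrier of `FP V k A` for a structure `A` on `α`. -/
abbrev Play (k : ℕ) (α : Type) : Type := {l : List (Fin k × α) // l ≠ []}

namespace Play

variable {k : ℕ} {α : Type} {s t u : Play k α} {l w : List (Fin k × α)}

/-- The pebble used in the last move. -/
def pebble (t : Play k α) : Fin k := (t.1.getLast t.2).1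

/-- The element chosen in the last move. -/
def elem (t : Play k α) : α := (t.1.getLast t.2).2

/-- `t` is a prefix of `l` whose last pebble has not been moved since, so that the last move
of `t` is still on the board at the end of `l`. -/
def ActiveIn (t : Play k α) (l : List (Fin k × α)) : Prop :=
  ∃ w, l = t.1 ++ w ∧ ∀ m ∈ w, m.1 ≠ t.pebble

theorem activeIn_self (t : Play k α) : t.ActiveIn t.1 := ⟨[], by simp, by simp⟩

theorem ActiveIn.isPrefix (h : t.ActiveIn l) : t.1 <+: l := by
  obtain ⟨w, rfl, -⟩ := h
  exact ⟨w, rfl⟩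

theorem activeIn_append_iff : t.ActiveIn (t.1 ++ w) ↔ ∀ m ∈ w, m.1 ≠ t.pebble := by
  simp [ActiveIn]

theorem ActiveIn.of_isPrefix (h : t.ActiveIn l) (htu : t.1 <+: u.1) (hul : u.1 <+: l) :
    t.ActiveIn u.1 := by
  obtain ⟨w, hw⟩ := htu
  obtain ⟨w', rfl⟩ := hul
  rw [← hw, List.append_assoc, activeIn_append_iff] at h
  rw [← hw, activeIn_append_iff]
  exact fun m hm => h m (List.mem_append_left _ hm)

theorem ActiveIn.pebble_ne (h : s.ActiveIn u.1) (hst : s.1 <+: t.1) (hne : s ≠ t)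
    (htu : t.1 <+: u.1) : t.pebble ≠ s.pebble := by
  obtain ⟨w, hw⟩ := hst
  have hact := h.of_isPrefix ⟨w, hw⟩ htu
  rw [← hw, activeIn_append_iff] at hact
  have hwne : w ≠ [] := by
    rintro rfl
    exact hne (Subtype.ext (by simpa using hw))
  refine hact _ ?_
  simp only [← hw, List.getLast_append_of_ne_nil _ hwne, List.getLast_mem]

/-- The last moves of `s` and `t` are on the board simultaneously. -/
def Coexist (s t : Play k α) : Prop := s.ActiveIn t.1 ∨ t.ActiveIn s.1

theorem coexist_comm : s.Coexist t ↔ t.Coexist s := or_comm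

theorem ActiveIn.coexist (hs : s.ActiveIn l) (ht : t.ActiveIn l) : s.Coexist t :=
  (List.prefix_or_prefix_of_prefix hs.isPrefix ht.isPrefix).imp
    (fun h => hs.of_isPrefix h ht.isPrefix) (fun h => ht.of_isPrefix h hs.isPrefix)

theorem coexist_iff_activeIn (h : s.1 <+: t.1) : s.Coexist t ↔ s.ActiveIn t.1 := by
  refine ⟨?_, .inl⟩
  rintro (hst | hts)
  · exact hst
  · obtain rfl : s = t := Subtype.ext (h.eq_of_length_le hts.isPrefix.length_le)
    exact hts

theorem coexist_iff : s.Coexist t ↔ (s.1 <+: t.1 ∨ t.1 <+: s.1) ∧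
    (∀ w, t.1 = s.1 ++ w → ∀ m ∈ w, m.1 ≠ s.pebble) ∧
    ∀ w, s.1 = t.1 ++ w → ∀ m ∈ w, m.1 ≠ t.pebble := by
  constructor
  · intro h
    refine ⟨h.imp ActiveIn.isPrefix ActiveIn.isPrefix, fun w hw => ?_, fun w hw => ?_⟩
    · rwa [coexist_iff_activeIn ⟨w, hw.symm⟩, hw, activeIn_append_iff] at h
    · rwa [coexist_comm, coexist_iff_activeIn ⟨w, hw.symm⟩, hw, activeIn_append_iff] at h
  · rintro ⟨⟨w, hw⟩ | ⟨w, hw⟩, hst, hts⟩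
    · exact .inl ⟨w, hw.symm, hst w hw.symm⟩
    · exact .inr ⟨w, hw.symm, hts w hw.symm⟩

theorem exists_forall_activeIn {ι : Type*} [Finite ι] {v : ι → Play k α}
    (hv : ∀ i j, (v i).Coexist (v j)) : ∃ l, ∀ i, (v i).ActiveIn l := by
  cases isEmpty_or_nonempty ι
  · exact ⟨[], isEmptyElim⟩
  · obtain ⟨j, hj⟩ := Finite.exists_max fun i => (v i).1.length
    refine ⟨(v j).1, fun i => ?_⟩
    rcases hv i j with h | h
    · exact h
    · exact h.isPrefix.eq_of_length_le (hj i) ▸ activeIn_self (v i)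

end Play

namespace FP

open Play

variable {V : Vocab} {k : ℕ} {α : Type} {A : Str V α}

theorem rel_iff {r : V.Rel} {v : Fin (V.ar r) → Play k α} :
    (FP V k A).rel r v ↔ (∀ i j, (v i).Coexist (v j)) ∧ A.rel r fun i => (v i).elem := by
  simp only [coexist_iff]
  exact ⟨fun ⟨hcomp, hpeb, hr⟩ => ⟨fun i j => ⟨hcomp i j, hpeb i j, hpeb j i⟩, hr⟩,
    fun ⟨h, hr⟩ => ⟨fun i j => (h i j).1, fun i j => (h i j).2.1, hr⟩⟩

theorem ieq_iff {s t : Play k α} : (FP V k A).ieq s t ↔ s.Coexist t ∧ s.elem = t.elem := by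
  rw [coexist_iff, and_assoc, and_assoc]
  rfl

theorem isRoot_iff {s : Play k α} : (FP V k A).IsRoot s ↔ ∃ m, s.1 = [m] := by
  constructor
  · obtain ⟨_ | ⟨m, l⟩, hs⟩ := s
    · exact absurd rfl hs
    · exact fun h => ⟨m, (congrArg Subtype.val (h ⟨[m], by simp⟩ ⟨l, rfl⟩)).symm⟩
  · rintro ⟨m, hm⟩ t (hts : t.1 <+: s.1)
    refine Subtype.ext (hts.eq_of_length_le ?_)
    rw [hm]
    exact List.length_pos_iff.2 t.2

theorem cover_iff {s t : Play k α} : (FP V k A).Cover s t ↔ ∃ m, t.1 = s.1 ++ [m] := by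
  constructor
  · rintro ⟨⟨_ | ⟨m, w⟩, hw⟩, hne, hcov⟩
    · exact absurd (Subtype.ext (by simpa using hw)) hne
    · refine ⟨m, ?_⟩
      rcases hcov ⟨s.1 ++ [m], by simp⟩ ⟨[m], rfl⟩ ⟨w, by simpa using hw⟩ with h | h
      · simpa using congrArg Subtype.val h
      · exact (congrArg Subtype.val h).symm
  · rintro ⟨m, hm⟩
    refine ⟨⟨[m], hm.symm⟩, ?_, fun z (hsz : s.1 <+: z.1) (hzt : z.1 <+: t.1) => ?_⟩
    · rintro rfl
      simp at hm
    · rw [hm, List.prefix_concat_iff, ← hm] at hzt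
      exact hzt.symm.imp (fun h => Subtype.ext (h.eq_of_length_le hsz.length_le)) Subtype.ext

theorem coexist_of_adj {s t : Play k α} (h : (FP V k A).Adj s t) : s.Coexist t := by
  obtain ⟨-, ⟨r, v, hr, ⟨i, rfl⟩, ⟨j, rfl⟩⟩ | hst | hts⟩ := h
  · exact (rel_iff.1 hr).1 i j
  · exact (ieq_iff.1 hst).1
  · exact coexist_comm.1 (ieq_iff.1 hts).1

variable (A) in
theorem isCoalg : (FP V k A).IsCoalg := by
  refine ⟨fun _ => List.prefix_refl _, fun _ _ _ => List.IsPrefix.trans,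
    fun s t (hst : s.1 <+: t.1) (hts : t.1 <+: s.1) =>
      Subtype.ext (hst.eq_of_length_le hts.length_le),
    fun s => ⟨?_, fun _ _ => List.prefix_or_prefix_of_prefix⟩,
    fun s t hadj => (coexist_of_adj hadj).imp ActiveIn.isPrefix ActiveIn.isPrefix, ?_⟩
  · refine ((List.finite_toSet s.1.inits).preimage Subtype.val_injective.injOn).subset ?_
    exact fun t ht => (List.mem_inits _ _).2 ht
  · intro s t hadj hst _ u hsu hne hut
    have hact := (coexist_iff_activeIn hst).1 (coexist_of_adj hadj)
    exact (hact.pebble_ne hsu hne hut).symm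

end FP

section Assignment

variable {k : ℕ} {α : Type}

/-- The partial assignment of elements to pebbles (i.e. variables) at the end of a sequence of
moves. -/
def assignment (l : List (Fin k × α)) : Fin k → Option α :=
  l.foldl (fun e m => Function.update e m.1 (some m.2)) fun _ => none

theorem assignment_concat (l : List (Fin k × α)) (m : Fin k × α) :
    assignment (l ++ [m]) = Function.update (assignment l) m.1 (some m.2) := by
  simp [assignment]

theorem assignment_append_of_forall_ne (l : List (Fin k × α)) {w : List (Fin k × α)} {p : Fin k}
    (h : ∀ m ∈ w, m.1 ≠ p) : assignment (l ++ w) p = assignment l p := by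
  induction w using List.reverseRecOn with
  | nil => simp
  | append_singleton w m ih =>
    rw [← List.append_assoc, assignment_concat, Function.update_of_ne (h m (by simp)).symm]
    exact ih fun m' hm' => h m' (List.mem_append_left _ hm')

theorem Play.ActiveIn.assignment_eq {t : Play k α} {l : List (Fin k × α)} (h : t.ActiveIn l) :
    assignment l t.pebble = some t.elem := by
  obtain ⟨w, rfl, hw⟩ := h
  rw [assignment_append_of_forall_ne t.1 hw]
  conv_lhs => rw [← List.dropLast_append_getLast t.2, assignment_concat]
  exact Function.update_self ..

theorem exists_activeIn_of_assignment_eq {l : List (Fin k × α)} {p : Fin k} {a : α}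
    (h : assignment l p = some a) :
    ∃ t : Play k α, t.ActiveIn l ∧ t.pebble = p ∧ t.elem = a := by
  induction l using List.reverseRecOn with
  | nil => cases h
  | append_singleton l m ih =>
    rw [assignment_concat] at h
    by_cases hp : p = m.1
    · subst hp
      rw [Function.update_self, Option.some.injEq] at h
      exact ⟨⟨l ++ [m], by simp⟩, Play.activeIn_self _, by simp [Play.pebble],
        by simp [Play.elem, h]⟩
    · rw [Function.update_of_ne hp] at h
      obtain ⟨t, ⟨w, rfl, hw⟩, rfl, ht⟩ := ih h
      refine ⟨t, ⟨w ++ [m], List.append_assoc .., fun m' hm' => ?_⟩, rfl, ht⟩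
      rcases List.mem_append.1 hm' with hm' | hm'
      · exact hw m' hm'
      · rw [List.mem_singleton.1 hm']
        exact Ne.symm hp

end Assignment

/-- Strategies of Duplicator, as maps sending each sequence of Spoiler's moves in `α` to the
sequence of Duplicator's answers in `β`. -/
structure IsStrategy {k : ℕ} {α β : Type} (F : List (Fin k × α) → List (Fin k × β)) : Prop where
  nil : F [] = []
  concat : ∀ l p a, ∃ b, F (l ++ [(p, a)]) = F l ++ [(p, b)]

theorem exists_isStrategy_of_forth {k : ℕ} {α β : Type}
    {R : List (Fin k × α) → List (Fin k × β) → Prop} (nil : R [] [])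
    (forth : ∀ {l l'}, R l l' → ∀ p a, ∃ b, R (l ++ [(p, a)]) (l' ++ [(p, b)])) :
    ∃ F, IsStrategy F ∧ ∀ l, R l (F l) := by
  let G (l : List (Fin k × α)) : {l' // R l l'} := l.reverseRecOn ⟨[], nil⟩ fun _ m g =>
    ⟨g.1 ++ [(m.1, (forth g.2 m.1 m.2).choose)], (forth g.2 m.1 m.2).choose_spec⟩
  refine ⟨fun l => (G l).1, ⟨?_, fun l p a => ⟨(forth (G l).2 p a).choose, ?_⟩⟩, fun l => (G l).2⟩
  · simp only [G, List.reverseRecOn_nil]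
  · simp only [G, List.reverseRecOn_concat]

namespace IsStrategy

open Play

variable {V : Vocab} {k : ℕ} {α β : Type} {F : List (Fin k × α) → List (Fin k × β)}

theorem exists_append (hF : IsStrategy F) (l w : List (Fin k × α)) :
    ∃ w', F (l ++ w) = F l ++ w' ∧ w'.map Prod.fst = w.map Prod.fst := by
  induction w using List.reverseRecOn with
  | nil => exact ⟨[], by simp, rfl⟩
  | append_singleton w m ih =>
    obtain ⟨w', happ, hmap⟩ := ih
    obtain ⟨b, hb⟩ := hF.concat (l ++ w) m.1 m.2
    exact ⟨w' ++ [(m.1, b)], by rw [← List.append_assoc, hb, happ, List.append_assoc],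
      by simp [hmap]⟩

theorem map_fst (hF : IsStrategy F) (l : List (Fin k × α)) :
    (F l).map Prod.fst = l.map Prod.fst := by
  obtain ⟨w, happ, hmap⟩ := hF.exists_append [] l
  rw [hF.nil, List.nil_append, List.nil_append] at happ
  rw [happ, hmap]

theorem ne_nil (hF : IsStrategy F) {l : List (Fin k × α)} (hl : l ≠ []) : F l ≠ [] := by
  have hmap : l.map Prod.fst ≠ [] := by simpa using hl
  rw [← hF.map_fst] at hmap
  simpa using hmap

theorem isPrefix_of_isPrefix (hF : IsStrategy F) {l l' : List (Fin k × α)} (h : l <+: l') :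
    F l <+: F l' := by
  obtain ⟨w, rfl⟩ := h
  obtain ⟨w', happ, -⟩ := hF.exists_append l w
  exact ⟨w', happ.symm⟩

/-- The restriction of a strategy to non-empty plays, i.e. the map between co-free coalgebras
it induces. -/
def onPlays (hF : IsStrategy F) (t : Play k α) : Play k β := ⟨F t.1, hF.ne_nil t.2⟩

theorem pebble_onPlays (hF : IsStrategy F) (t : Play k α) : (hF.onPlays t).pebble = t.pebble := by
  have hF' : (F t.1).map Prod.fst ≠ [] := by simpa using hF.ne_nil t.2
  have ht : t.1.map Prod.fst ≠ [] := by simpa using t.2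
  calc (hF.onPlays t).pebble = ((F t.1).map Prod.fst).getLast hF' := (List.getLast_map _).symm
    _ = (t.1.map Prod.fst).getLast ht := by simp only [hF.map_fst]
    _ = t.pebble := List.getLast_map _

theorem activeIn_onPlays_iff (hF : IsStrategy F) {t : Play k α} {l : List (Fin k × α)}
    (h : t.1 <+: l) : (hF.onPlays t).ActiveIn (F l) ↔ t.ActiveIn l := by
  obtain ⟨w, rfl⟩ := h
  obtain ⟨w', happ, hmap⟩ := hF.exists_append t.1 w
  have forall_fst {γ : Type} (u : List (Fin k × γ)) :
      (∀ m ∈ u, m.1 ≠ t.pebble) ↔ ∀ p ∈ u.map Prod.fst, p ≠ t.pebble := by simp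
  rw [happ]
  calc (hF.onPlays t).ActiveIn ((hF.onPlays t).1 ++ w')
      ↔ ∀ m ∈ w', m.1 ≠ t.pebble := by rw [activeIn_append_iff, hF.pebble_onPlays]
    _ ↔ ∀ m ∈ w, m.1 ≠ t.pebble := by rw [forall_fst, hmap, ← forall_fst]
    _ ↔ t.ActiveIn (t.1 ++ w) := activeIn_append_iff.symm

theorem coexist_onPlays_iff (hF : IsStrategy F) {s t : Play k α}
    (h : s.1 <+: t.1 ∨ t.1 <+: s.1) : (hF.onPlays s).Coexist (hF.onPlays t) ↔ s.Coexist t := by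
  rcases h with h | h
  · rw [coexist_iff_activeIn (hF.isPrefix_of_isPrefix h), coexist_iff_activeIn h]
    exact hF.activeIn_onPlays_iff h
  · rw [coexist_comm, coexist_iff_activeIn (hF.isPrefix_of_isPrefix h), coexist_comm,
      coexist_iff_activeIn h]
    exact hF.activeIn_onPlays_iff h

theorem assignment_eq (hF : IsStrategy F) {t : Play k α} {l : List (Fin k × α)}
    (h : t.ActiveIn l) : assignment (F l) t.pebble = some (hF.onPlays t).elem := by
  rw [← hF.pebble_onPlays]
  exact ((hF.activeIn_onPlays_iff h.isPrefix).2 h).assignment_eq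

theorem exists_of_isHom {A : Str V α} {B : Str V β} {f : Play k α → Play k β}
    (hf : PObj.IsHom (FP V k A) (FP V k B) f) :
    ∃ (F : List (Fin k × α) → List (Fin k × β)) (hF : IsStrategy F), hF.onPlays = f := by
  classical
  obtain ⟨-, -, hroot, hcover, hpeb⟩ := hf
  let F (l : List (Fin k × α)) : List (Fin k × β) := if h : l = [] then [] else (f ⟨l, h⟩).1
  have hFf (t : Play k α) : F t.1 = (f t).1 := dif_neg t.2
  have hF : IsStrategy F := by
    refine ⟨dif_pos rfl, fun l p a => ?_⟩
    let t : Play k α := ⟨l ++ [(p, a)], by simp⟩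
    obtain ⟨m, hm⟩ : ∃ m, (f t).1 = F l ++ [m] := by
      by_cases hl : l = []
      · subst hl
        exact FP.isRoot_iff.1 (hroot t (FP.isRoot_iff.2 ⟨_, rfl⟩))
      · rw [hFf ⟨l, hl⟩]
        exact FP.cover_iff.1 (hcover ⟨l, hl⟩ t (FP.cover_iff.2 ⟨_, rfl⟩))
    have hmp : m.1 = p := by simpa [FP, hm, t] using hpeb t
    exact ⟨m.2, by rw [hFf t, hm, ← hmp]⟩
  exact ⟨F, hF, funext fun t => Subtype.ext (hFf t)⟩

end IsStrategy

/-- `e i ↦ e' i` is a well-defined partial isomorphism from `A` to `B` on the values of `e`. -/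
structure PartialIso_s5 {V : Vocab} {k : ℕ} {α β : Type} (A : Str V α) (B : Str V β)
    (e : Fin k → Option α) (e' : Fin k → Option β) : Prop where
  exists_eq_some : ∀ {i a}, e i = some a → ∃ b, e' i = some b
  rel_iff : ∀ {r : V.Rel} {v : Fin (V.ar r) → Fin k} {g g'}, (∀ i, e (v i) = some (g i)) →
    (∀ i, e' (v i) = some (g' i)) → (A.rel r g ↔ B.rel r g')
  eq_iff : ∀ {i j a₁ a₂ b₁ b₂}, e i = some a₁ → e j = some a₂ → e' i = some b₁ → e' j = some b₂ →
    (a₁ = a₂ ↔ b₁ = b₂)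

namespace IsStrategy

open Play

variable {V : Vocab} {k : ℕ} {α β : Type} {F : List (Fin k × α) → List (Fin k × β)}
  {A : Str V α} {B : Str V β}

theorem rel_onPlays_iff (hF : IsStrategy F)
    (hiso : ∀ l, PartialIso_s5 A B (assignment l) (assignment (F l))) {r : V.Rel}
    {v : Fin (V.ar r) → Play k α} (hv : ∀ i j, (FP V k A).Comparable (v i) (v j)) :
    ((FP V k B).rel r fun i => hF.onPlays (v i)) ↔ (FP V k A).rel r v := by
  rw [FP.rel_iff, FP.rel_iff]
  simp only [fun i j => hF.coexist_onPlays_iff (hv i j)]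
  refine and_congr_right fun hcoexist => ?_
  obtain ⟨l, hl⟩ := exists_forall_activeIn hcoexist
  exact ((hiso l).rel_iff (fun i => (hl i).assignment_eq) fun i => hF.assignment_eq (hl i)).symm

theorem ieq_onPlays_iff (hF : IsStrategy F)
    (hiso : ∀ l, PartialIso_s5 A B (assignment l) (assignment (F l))) {s t : Play k α}
    (hst : (FP V k A).Comparable s t) :
    (FP V k B).ieq (hF.onPlays s) (hF.onPlays t) ↔ (FP V k A).ieq s t := by
  rw [FP.ieq_iff, FP.ieq_iff, hF.coexist_onPlays_iff hst]
  refine and_congr_right fun hcoexist => ?_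
  obtain ⟨l, hs, ht⟩ : ∃ l, s.ActiveIn l ∧ t.ActiveIn l :=
    hcoexist.elim (fun h => ⟨t.1, h, activeIn_self t⟩) (fun h => ⟨s.1, activeIn_self s, h⟩)
  exact ((hiso l).eq_iff hs.assignment_eq ht.assignment_eq (hF.assignment_eq hs)
    (hF.assignment_eq ht)).symm

theorem isHom_onPlays (hF : IsStrategy F)
    (hiso : ∀ l, PartialIso_s5 A B (assignment l) (assignment (F l))) :
    PObj.IsHom (FP V k A) (FP V k B) hF.onPlays := by
  refine ⟨fun r v hr => (hF.rel_onPlays_iff hiso hr.1).2 hr,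
    fun s t hst => (hF.ieq_onPlays_iff hiso hst.1).2 hst, fun s hs => ?_, fun s t hst => ?_,
    hF.pebble_onPlays⟩
  · obtain ⟨m, hm⟩ := FP.isRoot_iff.1 hs
    obtain ⟨b, hb⟩ := hF.concat [] m.1 m.2
    exact FP.isRoot_iff.2 ⟨(m.1, b), (congrArg F hm).trans (by simpa [hF.nil] using hb)⟩
  · obtain ⟨m, hm⟩ := FP.cover_iff.1 hst
    obtain ⟨b, hb⟩ := hF.concat s.1 m.1 m.2
    exact FP.cover_iff.2 ⟨(m.1, b), (congrArg F hm).trans hb⟩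

theorem isPWEmb_onPlays (hF : IsStrategy F)
    (hiso : ∀ l, PartialIso_s5 A B (assignment l) (assignment (F l))) :
    PObj.IsPWEmb (FP V k A) (FP V k B) hF.onPlays :=
  (PObj.isPWEmb_iff (FP.isCoalg A) (FP.isCoalg B)).2 ⟨hF.isHom_onPlays hiso,
    fun _ _ hv => (hF.rel_onPlays_iff hiso hv).1, fun _ _ hst => (hF.ieq_onPlays_iff hiso hst).1⟩

theorem partialIso_of_isPWEmb (hF : IsStrategy F)
    (hpw : PObj.IsPWEmb (FP V k A) (FP V k B) hF.onPlays) (l : List (Fin k × α)) :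
    PartialIso_s5 A B (assignment l) (assignment (F l)) := by
  have hrefl := hpw.reflectsOnChains (FP.isCoalg A)
  obtain ⟨⟨hrel, hieq, -⟩, -⟩ := hpw
  have lift {i : Fin k} {a : α} (h : assignment l i = some a) : ∃ t : Play k α,
      t.ActiveIn l ∧ t.elem = a ∧ assignment (F l) i = some (hF.onPlays t).elem := by
    obtain ⟨t, ht, rfl, ha⟩ := exists_activeIn_of_assignment_eq h
    exact ⟨t, ht, ha, hF.assignment_eq ht⟩
  have comparable {s t : Play k α} (hs : s.ActiveIn l) (ht : t.ActiveIn l) :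
      (FP V k A).Comparable s t := List.prefix_or_prefix_of_prefix hs.isPrefix ht.isPrefix
  refine ⟨fun h => ?_, fun {r v g g'} hg hg' => ?_, fun {i j a₁ a₂ b₁ b₂} h₁ h₂ h₁' h₂' => ?_⟩
  · obtain ⟨t, -, -, ht⟩ := lift h
    exact ⟨_, ht⟩
  · choose t hact helem hval using fun i => lift (hg i)
    obtain rfl : (fun i => (t i).elem) = g := funext helem
    obtain rfl : (fun i => (hF.onPlays (t i)).elem) = g' :=
      funext fun i => Option.some.inj ((hval i).symm.trans (hg' i))
    have hcomp i j := comparable (hact i) (hact j)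
    have hcoexist i j := (hact i).coexist (hact j)
    have hcoexist' i j := (hF.coexist_onPlays_iff (hcomp i j)).2 (hcoexist i j)
    exact ⟨fun h => (FP.rel_iff.1 (hrel r t (FP.rel_iff.2 ⟨hcoexist, h⟩))).2,
      fun h => (FP.rel_iff.1 (hrefl.rel r t hcomp (FP.rel_iff.2 ⟨hcoexist', h⟩))).2⟩
  · obtain ⟨s, hs, rfl, hsval⟩ := lift h₁
    obtain ⟨t, ht, rfl, htval⟩ := lift h₂
    obtain rfl := Option.some.inj (hsval.symm.trans h₁')
    obtain rfl := Option.some.inj (htval.symm.trans h₂')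
    have hcomp := comparable hs ht
    have hcoexist' := (hF.coexist_onPlays_iff hcomp).2 (hs.coexist ht)
    exact ⟨fun h => (FP.ieq_iff.1 (hieq s t (FP.ieq_iff.2 ⟨hs.coexist ht, h⟩))).2,
      fun h => (FP.ieq_iff.1 (hrefl.ieq s t hcomp (FP.ieq_iff.2 ⟨hcoexist', h⟩))).2⟩

theorem sat_of_partialIso (hF : IsStrategy F)
    (hiso : ∀ l, PartialIso_s5 A B (assignment l) (assignment (F l))) (φ : LFml V k)
    (l : List (Fin k × α)) (h : φ.Sat A (assignment l)) : φ.Sat B (assignment (F l)) := by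
  induction φ generalizing l with
  | rel r v =>
    obtain ⟨g, hg, hr⟩ := h
    choose g' hg' using fun i => (hiso l).exists_eq_some (hg i)
    exact ⟨g', hg', ((hiso l).rel_iff hg hg').1 hr⟩
  | nrel r v =>
    obtain ⟨g, hg, hr⟩ := h
    choose g' hg' using fun i => (hiso l).exists_eq_some (hg i)
    exact ⟨g', hg', mt ((hiso l).rel_iff hg hg').2 hr⟩
  | eq i j =>
    obtain ⟨a, hi, hj⟩ := h
    obtain ⟨b, hi'⟩ := (hiso l).exists_eq_some hi
    obtain ⟨b', hj'⟩ := (hiso l).exists_eq_some hj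
    obtain rfl : b = b' := ((hiso l).eq_iff hi hj hi' hj').1 rfl
    exact ⟨b, hi', hj'⟩
  | ne i j =>
    obtain ⟨a, a', hi, hj, hne⟩ := h
    obtain ⟨b, hi'⟩ := (hiso l).exists_eq_some hi
    obtain ⟨b', hj'⟩ := (hiso l).exists_eq_some hj
    exact ⟨b, b', hi', hj', mt ((hiso l).eq_iff hi hj hi' hj').2 hne⟩
  | iand ι f ih => exact fun x => ih x l (h x)
  | ior ι f ih => exact h.imp fun x => ih x l
  | ex i φ ih =>
    obtain ⟨a, ha⟩ := h
    obtain ⟨b, hb⟩ := hF.concat l i a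
    rw [← assignment_concat l (i, a)] at ha
    refine ⟨b, ?_⟩
    rw [← assignment_concat (F l) (i, b), ← hb]
    exact ih _ ha

end IsStrategy

section Transfers

variable {V : Vocab} {k : ℕ} {α β : Type} {A : Str V α} {B : Str V β} {e : Fin k → Option α}
  {e' : Fin k → Option β}

/-- Every formula of `∃L^k` over the variables assigned by `e` that holds in `A` under `e` holds
in `B` under `e'`.  This is the invariant Duplicator maintains. -/
def Transfers (A : Str V α) (B : Str V β) (e : Fin k → Option α) (e' : Fin k → Option β) : Prop :=
  ∀ φ : LFml V k, (∀ i ∈ φ.freeVars, e i ≠ none) → φ.Sat A e → φ.Sat B e'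

theorem Transfers.forth (h : Transfers A B e e') (p : Fin k) (a : α) :
    ∃ b, Transfers A B (Function.update e p (some a)) (Function.update e' p (some b)) := by
  by_contra hno
  simp only [Transfers] at hno
  push Not at hno
  choose φ hfree hA hB using hno
  have hfree_ex : ∀ i ∈ (LFml.ex p (.iand β φ)).freeVars, e i ≠ none := by
    rintro i ⟨hi, hip⟩
    obtain ⟨b, hb⟩ := Set.mem_iUnion.1 hi
    simpa only [Function.update_of_ne hip] using hfree b i hb
  obtain ⟨b, hb⟩ := h (.ex p (.iand β φ)) hfree_ex ⟨a, hA⟩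
  exact hB b (hb b)

theorem Transfers.partialIso (h : Transfers A B e e') : PartialIso_s5 A B e e' where
  exists_eq_some {i a} hi := by
    obtain ⟨b, hb, -⟩ := h (.eq i i) (by simp [LFml.freeVars, hi]) ⟨a, hi, hi⟩
    exact ⟨b, hb⟩
  rel_iff {r v g g'} hg hg' := by
    have hfree : ∀ i ∈ Set.range v, e i ≠ none := by
      rintro _ ⟨i, rfl⟩
      simp [hg i]
    have unique {g''} (hg'' : ∀ i, e' (v i) = some (g'' i)) : g'' = g' :=
      funext fun i => Option.some.inj ((hg'' i).symm.trans (hg' i))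
    refine ⟨fun hA => ?_, fun hB => ?_⟩
    · obtain ⟨g'', hg'', hB⟩ := h (.rel r v) hfree ⟨g, hg, hA⟩
      exact unique hg'' ▸ hB
    · by_contra hA
      obtain ⟨g'', hg'', hnB⟩ := h (.nrel r v) hfree ⟨g, hg, hA⟩
      exact hnB (unique hg'' ▸ hB)
  eq_iff {i j a₁ a₂ b₁ b₂} hi hj hi' hj' := by
    have hfree : ∀ l ∈ ({i, j} : Set (Fin k)), e l ≠ none := by simp [hi, hj]
    refine ⟨fun ha => ?_, fun hb => ?_⟩
    · obtain ⟨b, hbi, hbj⟩ := h (.eq i j) hfree ⟨a₁, hi, ha ▸ hj⟩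
      exact Option.some.inj (hi'.symm.trans (hbi.trans (hbj.symm.trans hj')))
    · by_contra ha
      obtain ⟨b, b', hbi, hbj, hne⟩ := h (.ne i j) hfree ⟨a₁, a₂, hi, hj, ha⟩
      rw [hi', Option.some.injEq] at hbi
      rw [hj', Option.some.injEq] at hbj
      exact hne (hbi ▸ hbj ▸ hb)

end Transfers

theorem exists_isPWEmb_iff_forall_sentence {V : Vocab} {k : ℕ} {α β : Type} (A : Str V α)
    (B : Str V β) :
    (∃ f, PObj.IsPWEmb (FP V k A) (FP V k B) f) ↔
      ∀ φ : LFml V k, φ.freeVars = ∅ → φ.Sat A (fun _ => none) → φ.Sat B fun _ => none := by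
  constructor
  · rintro ⟨f, hf⟩ φ - hA
    obtain ⟨F, hF, rfl⟩ := IsStrategy.exists_of_isHom hf.1
    have hB := hF.sat_of_partialIso (hF.partialIso_of_isPWEmb hf) φ [] hA
    rwa [hF.nil] at hB
  · intro h
    have hstart : Transfers (k := k) A B (assignment []) (assignment []) := fun φ hφ =>
      h φ (Set.eq_empty_of_forall_notMem fun i hi => hφ i hi rfl)
    obtain ⟨F, hF, htransfers⟩ := exists_isStrategy_of_forth
      (R := fun l l' => Transfers A B (assignment l) (assignment l')) hstart
      fun hl p a => by simpa only [assignment_concat] using hl.forth p a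
    exact ⟨hF.onPlays, hF.isPWEmb_onPlays fun l => (htransfers l).partialIso⟩

theorem existential_Lk_equivalence_iff_pathwise_embeddings_general
    (V : Vocab) {α β : Type} (A : Str V α) (B : Str V β) (k : ℕ) :
    (∀ φ : LFml V k, φ.freeVars = ∅ →
        (φ.Sat A (fun _ => none) ↔ φ.Sat B (fun _ => none))) ↔
      ((∃ f, PObj.IsPWEmb (FP V k A) (FP V k B) f) ∧
        (∃ g, PObj.IsPWEmb (FP V k B) (FP V k A) g)) := by
  simp only [exists_isPWEmb_iff_forall_sentence, iff_def, imp_and, forall_and]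

/-- `A` and `B` satisfy the same sentences of `∃L^k` if, and only if, there
exist pathwise embeddings `F_k^I(A) → F_k^I(B)` and `F_k^I(B) → F_k^I(A)` in
`EM(P_k^I)`. -/
theorem existential_Lk_equivalence_iff_pathwise_embeddings
    (V : Vocab) [Finite V.Rel] (har : ∀ r : V.Rel, V.ar r ≠ 0)
    {α β : Type} (A : Str V α) (B : Str V β) (k : ℕ) (hk : 0 < k) :
    (∀ φ : LFml V k, φ.freeVars = ∅ →
        (φ.Sat A (fun _ => none) ↔ φ.Sat B (fun _ => none))) ↔
      ((∃ f, PObj.IsPWEmb (FP V k A) (FP V k B) f) ∧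
        (∃ g, PObj.IsPWEmb (FP V k B) (FP V k A) g)) :=
  existential_Lk_equivalence_iff_pathwise_embeddings_general V A B k
end
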